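/- For every (n+2)-web of hypersurfaces ⟨ω₁, …, ω_{n+2}⟩ on U there exists a torsion-free affine connection Γ on U for which the web is geodesic. -/

import Mathlib

open scoped BigOperators

/-- Partial derivative in the `i`-th coordinate direction. -/
noncomputable def pd {n : ℕ} (i : Fin n) (f : (Fin n → ℝ) → ℝ) (x : Fin n → ℝ) : ℝ :=
  fderiv ℝ f x (Pi.single i 1)

/-- A torsion-free affine connection on `U`, given by its Christoffel symbols `Γ k i j`
(smooth on `U` and symmetric in the lower indices `i j`). -/
def IsTorsionFreeConn {n : ℕ} (U : Set (Fin n → ℝ))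
    (Γ : Fin n → Fin n → Fin n → (Fin n → ℝ) → ℝ) : Prop :=
  (∀ k i j, ContDiffOn ℝ (⊤ : ℕ∞) (Γ k i j) U) ∧ (∀ k i j x, Γ k i j x = Γ k j i x)

/-- `γ` is a geodesic of `Γ` on the set `I ⊆ ℝ`, with image in `U`. -/
def IsGeodesicOn {n : ℕ} (U : Set (Fin n → ℝ))
    (Γ : Fin n → Fin n → Fin n → (Fin n → ℝ) → ℝ)
    (I : Set ℝ) (γ : ℝ → Fin n → ℝ) : Prop :=
  (∀ t ∈ I, γ t ∈ U) ∧ ContDiffOn ℝ 2 γ I ∧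
    ∀ t ∈ I, ∀ k, deriv (fun s => deriv (fun u => γ u k) s) t +
      ∑ i, ∑ j, Γ k i j (γ t) * deriv (fun u => γ u i) t * deriv (fun u => γ u j) t = 0

/-- The codimension-one foliation defined by the `1`-form `ω` is totally geodesic for `Γ`:
every geodesic tangent to a leaf at time `0` stays tangent to the kernel of `ω`. -/
def TotallyGeodesic {n : ℕ} (U : Set (Fin n → ℝ))
    (Γ : Fin n → Fin n → Fin n → (Fin n → ℝ) → ℝ)
    (ω : (Fin n → ℝ) → Fin n → ℝ) : Prop :=
  ∀ I : Set ℝ, IsOpen I → I.OrdConnected → (0 : ℝ) ∈ I →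
    ∀ γ : ℝ → Fin n → ℝ, IsGeodesicOn U Γ I γ →
      (∑ k, ω (γ 0) k * deriv (fun u => γ u k) 0) = 0 →
      ∀ t ∈ I, (∑ k, ω (γ t) k * deriv (fun u => γ u k) t) = 0

/-- `ω` is a smooth nonvanishing `1`-form on `U` satisfying the integrability
condition `ω ∧ dω = 0`. -/
def IsFoliationForm {n : ℕ} (U : Set (Fin n → ℝ)) (ω : (Fin n → ℝ) → Fin n → ℝ) : Prop :=
  ContDiffOn ℝ (⊤ : ℕ∞) ω U ∧ (∀ x ∈ U, ω x ≠ 0) ∧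
    ∀ x ∈ U, ∀ i j k,
      ω x i * (pd j (fun y => ω y k) x - pd k (fun y => ω y j) x) +
      ω x j * (pd k (fun y => ω y i) x - pd i (fun y => ω y k) x) +
      ω x k * (pd i (fun y => ω y j) x - pd j (fun y => ω y i) x) = 0

/-- Components of the symmetric covariant differential `d^s_Γ ω`. -/
noncomputable def dsym {n : ℕ} (Γ : Fin n → Fin n → Fin n → (Fin n → ℝ) → ℝ)
    (ω : (Fin n → ℝ) → Fin n → ℝ) (i j : Fin n) (x : Fin n → ℝ) : ℝ :=
  (pd i (fun y => ω y j) x + pd j (fun y => ω y i) x) / 2 - ∑ k, Γ k i j x * ω x k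

/-- Components of the symmetric product `θ·ω` of two `1`-forms. -/
noncomputable def symProd {n : ℕ} (θ ω : (Fin n → ℝ) → Fin n → ℝ) (i j : Fin n) (x : Fin n → ℝ) : ℝ :=
  (θ x i * ω x j + θ x j * ω x i) / 2

/-- A `d`-web of hypersurfaces on `U`: a family of smooth nonvanishing integrable `1`-forms,
any `n` of which are linearly independent at every point of `U`. -/
def IsWeb {n d : ℕ} (U : Set (Fin n → ℝ)) (ωs : Fin d → (Fin n → ℝ) → Fin n → ℝ) : Prop :=
  (∀ i, IsFoliationForm U (ωs i)) ∧
    ∀ x ∈ U, ∀ σ : Fin n → Fin d, Function.Injective σ →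
      LinearIndependent ℝ (fun i => ωs (σ i) x)

/-- `Γ` and `Γ'` are projectively equivalent on `U`:
`Γ'ᵏᵢⱼ = Γᵏᵢⱼ + δᵏᵢ ρⱼ + δᵏⱼ ρᵢ` for some smooth `1`-form `ρ`. -/
def ProjEquiv {n : ℕ} (U : Set (Fin n → ℝ))
    (Γ Γ' : Fin n → Fin n → Fin n → (Fin n → ℝ) → ℝ) : Prop :=
  ∃ ρ : (Fin n → ℝ) → Fin n → ℝ, ContDiffOn ℝ (⊤ : ℕ∞) ρ U ∧
    ∀ x ∈ U, ∀ k i j, Γ' k i j x =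
      Γ k i j x + (if k = i then ρ x j else 0) + (if k = j then ρ x i else 0)

/-- `X` is the frame of vector fields dual to the coframe `ωs` on `U`. -/
def IsDualFrame {n : ℕ} (U : Set (Fin n → ℝ)) (ωs : Fin n → (Fin n → ℝ) → Fin n → ℝ)
    (X : Fin n → (Fin n → ℝ) → Fin n → ℝ) : Prop :=
  (∀ i, ContDiffOn ℝ (⊤ : ℕ∞) (X i) U) ∧
    ∀ x ∈ U, ∀ i j, (∑ k, ωs i x k * X j x k) = if i = j then 1 else 0

/-- The web invariants `s^a_{ij} = (1/(aᵢ−aⱼ))·(aᵢ ∂ⱼ − aⱼ ∂ᵢ) log (aⱼ/aᵢ)`, where `∂ᵢ`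
is derivation along the frame vector field `X i`. -/
noncomputable def sInv {n : ℕ} (X : Fin n → (Fin n → ℝ) → Fin n → ℝ)
    (a : Fin n → (Fin n → ℝ) → ℝ) (i j : Fin n) (x : Fin n → ℝ) : ℝ :=
  (1 / (a i x - a j x)) *
    (a i x * (fderiv ℝ (a j) x (X j x) / a j x - fderiv ℝ (a i) x (X j x) / a i x) -
     a j x * (fderiv ℝ (a j) x (X i x) / a j x - fderiv ℝ (a i) x (X i x) / a i x))

/-- The curvature tensor `Rᵏₗᵢⱼ` of the connection `Γ`. -/
noncomputable def curv {n : ℕ} (Γ : Fin n → Fin n → Fin n → (Fin n → ℝ) → ℝ)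
    (k l i j : Fin n) (x : Fin n → ℝ) : ℝ :=
  pd i (Γ k j l) x - pd j (Γ k i l) x +
    ∑ m, (Γ k i m x * Γ m j l x - Γ k j m x * Γ m i l x)

/-!
If `d^s_Γ ω = θ·ω`, then along every geodesic `γ` of `Γ` the function `y = ω(γ')` solves the linear
equation `y' = θ(γ') y`, so it vanishes identically as soon as it vanishes once; moreover the
property of being totally geodesic only depends on `ω` up to a nonvanishing factor. Conversely, for
a coframe `ω₁, …, ωₙ` with dual frame `X₁, …, Xₙ` and arbitrary `1`-forms `θ₁, …, θₙ` there is a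
torsion-free `Γ` with `d^s_Γ ωᵢ = θᵢ·ωᵢ`.

General position allows the first `n` forms to be rescaled so that the next one is `∑ ωᵢ`; the last
one is then `∑ aᵢ ωᵢ` with `aᵢ` nonvanishing and pairwise distinct. Take `θᵢ = ∑ⱼ sᵢⱼ ωⱼ`, where `s`
are the web invariants. Then `d^s_Γ (∑ ωᵢ) = ∑ᵢⱼ sᵢⱼ ωⱼ·ωᵢ = 0` because `s` is antisymmetric, and
`s` is exactly the solution of the linear system which makes
`d^s_Γ (∑ aᵢ ωᵢ) = ∑ᵢⱼ (∂ⱼ aᵢ + aᵢ sᵢⱼ) ωⱼ·ωᵢ` equal to `θ·∑ aᵢ ωᵢ` with `θ = ∑ⱼ (∂ⱼ log aⱼ) ωⱼ`.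
-/

section LinearODE

variable {E : Type*} [NormedAddCommGroup E] [NormedSpace ℝ E] {g : ℝ → ℝ} {y : ℝ → E}

theorem eq_zero_right_of_hasDerivAt_smul {a b : ℝ} (hab : a ≤ b)
    (hg : ContinuousOn g (Set.Icc a b)) (hy : ∀ t ∈ Set.Icc a b, HasDerivAt y (g t • y t) t)
    (ha : y a = 0) : y b = 0 := by
  obtain ⟨K, hK⟩ := isCompact_Icc.exists_bound_of_continuousOn hg
  refine eq_zero_of_abs_deriv_le_mul_abs_self_of_eq_zero_right (K := K)
    (fun t ht => (hy t ht).continuousAt.continuousWithinAt)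
    (fun t ht => (hy t (Set.Ico_subset_Icc_self ht)).hasDerivWithinAt) ha (fun t ht => ?_)
    b (Set.right_mem_Icc.2 hab)
  rw [norm_smul]
  exact mul_le_mul_of_nonneg_right (hK t (Set.Ico_subset_Icc_self ht)) (norm_nonneg _)

theorem eq_zero_of_hasDerivAt_smul {I : Set ℝ} (hI : I.OrdConnected) {t₀ : ℝ} (ht₀ : t₀ ∈ I)
    (hg : ContinuousOn g I) (hy : ∀ t ∈ I, HasDerivAt y (g t • y t) t) (hy₀ : y t₀ = 0) :
    ∀ t ∈ I, y t = 0 := by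
  intro t ht
  rcases le_total t₀ t with h | h
  · exact eq_zero_right_of_hasDerivAt_smul h (hg.mono (hI.out ht₀ ht))
      (fun s hs => hy s (hI.out ht₀ ht hs)) hy₀
  · have hneg : ∀ s ∈ Set.Icc (-t₀) (-t), -s ∈ I := fun s hs =>
      hI.out ht ht₀ ⟨le_neg.1 hs.2, neg_le.1 hs.1⟩
    have hrefl : y (-(-t)) = 0 :=
      eq_zero_right_of_hasDerivAt_smul (y := fun s => y (-s)) (g := fun s => -g (-s))
        (neg_le_neg h) (hg.comp continuousOn_neg hneg).neg
        (fun s hs => by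
          simpa [Function.comp_def] using (hy _ (hneg s hs)).scomp s (hasDerivAt_neg s))
        (by simpa using hy₀)
    simpa using hrefl

end LinearODE

theorem contDiffOn_fderiv_apply {𝕜 E F : Type*} [NontriviallyNormedField 𝕜]
    [NormedAddCommGroup E] [NormedSpace 𝕜 E] [NormedAddCommGroup F] [NormedSpace 𝕜 F] {U : Set E}
    {f : E → F} {v : E → E} {N M : WithTop ℕ∞} (hU : IsOpen U) (hf : ContDiffOn 𝕜 M f U)
    (hv : ContDiffOn 𝕜 N v U) (hNM : N + 1 ≤ M) :
    ContDiffOn 𝕜 N (fun x => fderiv 𝕜 f x (v x)) U :=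
  (hf.fderiv_of_isOpen hU hNM).clm_apply hv

section SymmetricDifferential

variable {n : ℕ} {U : Set (Fin n → ℝ)} {Γ : Fin n → Fin n → Fin n → (Fin n → ℝ) → ℝ}
  {θ ω : (Fin n → ℝ) → Fin n → ℝ} {x : Fin n → ℝ}

theorem dsym_comm {i j : Fin n} (hΓ : ∀ k, Γ k i j x = Γ k j i x) :
    dsym Γ ω i j x = dsym Γ ω j i x := by
  simp only [dsym, hΓ, add_comm]

theorem symProd_comm (i j : Fin n) : symProd θ ω i j x = symProd θ ω j i x :=
  congrArg (· / 2) (add_comm _ _)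

theorem contDiffOn_dsym {N M : WithTop ℕ∞} (hU : IsOpen U) {i j : Fin n}
    (hΓ : ∀ k, ContDiffOn ℝ N (Γ k i j) U) (hω : ContDiffOn ℝ M ω U) (hNM : N + 1 ≤ M) :
    ContDiffOn ℝ N (dsym Γ ω i j) U := by
  have hω' := contDiffOn_pi.1 hω
  exact (((contDiffOn_fderiv_apply hU (hω' j) contDiffOn_const hNM).add
    (contDiffOn_fderiv_apply hU (hω' i) contDiffOn_const hNM)).div_const 2).sub
    (ContDiffOn.sum fun k _ => (hΓ k).mul ((hω' k).of_le (le_self_add.trans hNM)))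

theorem contDiffOn_symProd {N : WithTop ℕ∞} (hθ : ContDiffOn ℝ N θ U) (hω : ContDiffOn ℝ N ω U)
    (i j : Fin n) : ContDiffOn ℝ N (symProd θ ω i j) U := by
  have hθ' := contDiffOn_pi.1 hθ
  have hω' := contDiffOn_pi.1 hω
  exact (((hθ' i).mul (hω' j)).add ((hθ' j).mul (hω' i))).div_const 2

theorem sum_symProd_mul_mul (θ ω : (Fin n → ℝ) → Fin n → ℝ) (x v : Fin n → ℝ) :
    ∑ i, ∑ j, symProd θ ω i j x * v i * v j = (∑ i, θ x i * v i) * ∑ j, ω x j * v j := by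
  have hswap : ∑ i, ∑ j, θ x j * ω x i * v i * v j = ∑ i, ∑ j, θ x i * ω x j * v i * v j := by
    rw [Finset.sum_comm]
    exact Finset.sum_congr rfl fun i _ => Finset.sum_congr rfl fun j _ => by ring
  calc ∑ i, ∑ j, symProd θ ω i j x * v i * v j
      = (∑ i, ∑ j, θ x i * ω x j * v i * v j + ∑ i, ∑ j, θ x j * ω x i * v i * v j) / 2 := by
        simp_rw [← Finset.sum_add_distrib, Finset.sum_div]
        exact Finset.sum_congr rfl fun i _ => Finset.sum_congr rfl fun j _ => by
          rw [symProd]; ring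
    _ = ∑ i, ∑ j, θ x i * ω x j * v i * v j := by rw [hswap, add_self_div_two]
    _ = (∑ i, θ x i * v i) * ∑ j, ω x j * v j := by
        rw [Finset.sum_mul_sum]
        exact Finset.sum_congr rfl fun i _ => Finset.sum_congr rfl fun j _ => by ring

theorem sum_dsym_mul_mul (Γ : Fin n → Fin n → Fin n → (Fin n → ℝ) → ℝ)
    (ω : (Fin n → ℝ) → Fin n → ℝ) (x v : Fin n → ℝ) :
    ∑ i, ∑ j, dsym Γ ω i j x * v i * v j =
      ∑ k, ((∑ i, pd i (fun y => ω y k) x * v i) * v k -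
        ω x k * ∑ i, ∑ j, Γ k i j x * v i * v j) := by
  have hswap : ∑ i, ∑ j, pd j (fun y => ω y i) x * v i * v j =
      ∑ i, ∑ j, pd i (fun y => ω y j) x * v i * v j := by
    rw [Finset.sum_comm]
    exact Finset.sum_congr rfl fun i _ => Finset.sum_congr rfl fun j _ => by ring
  have hder : ∑ k, (∑ i, pd i (fun y => ω y k) x * v i) * v k =
      ∑ i, ∑ j, pd i (fun y => ω y j) x * v i * v j := by
    simp_rw [Finset.sum_mul]
    exact Finset.sum_comm
  have hconn : ∑ k, ω x k * ∑ i, ∑ j, Γ k i j x * v i * v j =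
      ∑ i, ∑ j, (∑ k, Γ k i j x * ω x k) * v i * v j := by
    simp_rw [Finset.mul_sum, Finset.sum_mul]
    rw [Finset.sum_comm]
    refine Finset.sum_congr rfl fun i _ => ?_
    rw [Finset.sum_comm]
    exact Finset.sum_congr rfl fun j _ => Finset.sum_congr rfl fun k _ => by ring
  rw [Finset.sum_sub_distrib, hconn, hder, ← add_self_div_two (∑ i, ∑ j, pd i _ x * v i * v j)]
  nth_rw 2 [← hswap]
  simp_rw [← Finset.sum_add_distrib, Finset.sum_div, ← Finset.sum_sub_distrib]
  exact Finset.sum_congr rfl fun i _ => Finset.sum_congr rfl fun j _ => by rw [dsym]; ring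

theorem dsym_smul {f : (Fin n → ℝ) → ℝ} (hf : DifferentiableAt ℝ f x)
    (hω : DifferentiableAt ℝ ω x) (i j : Fin n) :
    dsym Γ (f • ω) i j x = symProd (fun y k => pd k f y) ω i j x + f x * dsym Γ ω i j x := by
  have hpd : ∀ k l, pd k (fun y => (f • ω) y l) x =
      pd k f x * ω x l + f x * pd k (fun y => ω y l) x := fun k l => by
    change fderiv ℝ (fun y => f y * ω y l) x _ = _
    rw [fderiv_fun_mul hf (differentiableAt_pi.1 hω l)]
    simp only [pd, add_apply, smul_apply, smul_eq_mul]
    ring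
  have hconn : ∑ k, Γ k i j x * (f • ω) x k = f x * ∑ k, Γ k i j x * ω x k := by
    rw [Finset.mul_sum]
    exact Finset.sum_congr rfl fun k _ => mul_left_comm _ _ _
  simp only [dsym, symProd, hpd, hconn]
  ring

theorem dsym_sum {ι : Type*} (s : Finset ι) {η : ι → (Fin n → ℝ) → Fin n → ℝ}
    (hη : ∀ a ∈ s, DifferentiableAt ℝ (η a) x) (i j : Fin n) :
    dsym Γ (∑ a ∈ s, η a) i j x = ∑ a ∈ s, dsym Γ (η a) i j x := by
  have hpd : ∀ k l, pd k (fun y => (∑ a ∈ s, η a) y l) x =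
      ∑ a ∈ s, pd k (fun y => η a y l) x := fun k l => by
    simp only [pd, Finset.sum_apply]
    rw [fderiv_fun_sum fun a ha => differentiableAt_pi.1 (hη a ha) l]
    simp
  simp only [dsym, hpd]
  simp only [Finset.sum_apply, Finset.sum_sub_distrib, Finset.sum_add_distrib,
    Finset.mul_sum, ← Finset.sum_div]
  rw [Finset.sum_comm (s := s)]

end SymmetricDifferential

section Geodesics

variable {n : ℕ} {U : Set (Fin n → ℝ)} {Γ : Fin n → Fin n → Fin n → (Fin n → ℝ) → ℝ}
  {θ ω ω' : (Fin n → ℝ) → Fin n → ℝ} {I : Set ℝ} {γ : ℝ → Fin n → ℝ} {t : ℝ}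

theorem IsGeodesicOn.hasDerivAt (hγ : IsGeodesicOn U Γ I γ) (hI : IsOpen I) (ht : t ∈ I)
    (k : Fin n) : HasDerivAt (fun u => γ u k) (deriv (fun u => γ u k) t) t :=
  ((contDiffAt_pi.1 (hγ.2.1.contDiffAt (hI.mem_nhds ht)) k).differentiableAt
    two_ne_zero).hasDerivAt

theorem IsGeodesicOn.hasDerivAt_deriv (hγ : IsGeodesicOn U Γ I γ) (hI : IsOpen I) (ht : t ∈ I)
    (k : Fin n) : HasDerivAt (deriv fun u => γ u k)
      (-∑ i, ∑ j, Γ k i j (γ t) * deriv (fun u => γ u i) t * deriv (fun u => γ u j) t) t := by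
  have hC1 : ContDiffOn ℝ 1 (deriv fun u => γ u k) I :=
    (contDiffOn_pi.1 hγ.2.1 k).deriv_of_isOpen hI (by norm_num)
  rw [← eq_neg_of_add_eq_zero_left (hγ.2.2 t ht k)]
  exact ((hC1.contDiffAt (hI.mem_nhds ht)).differentiableAt one_ne_zero).hasDerivAt

theorem IsGeodesicOn.hasDerivAt_form_velocity (hγ : IsGeodesicOn U Γ I γ) (hI : IsOpen I)
    (ht : t ∈ I) (hω : DifferentiableAt ℝ ω (γ t)) :
    HasDerivAt (fun s => ∑ k, ω (γ s) k * deriv (fun u => γ u k) s)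
      (∑ i, ∑ j, dsym Γ ω i j (γ t) * deriv (fun u => γ u i) t * deriv (fun u => γ u j) t) t := by
  have hcoeff : ∀ k, HasDerivAt (fun s => ω (γ s) k)
      (∑ i, pd i (fun y => ω y k) (γ t) * deriv (fun u => γ u i) t) t := fun k => by
    refine ((differentiableAt_pi.1 hω k).hasFDerivAt.comp_hasDerivAt t
      (hasDerivAt_pi.2 (hγ.hasDerivAt hI ht))).congr_deriv ?_
    rw [pi_eq_sum_univ' fun i => deriv (fun u => γ u i) t]
    simp [pd, mul_comm]
  rw [sum_dsym_mul_mul]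
  simp_rw [sub_eq_add_neg, ← mul_neg]
  exact HasDerivAt.fun_sum fun k _ => (hcoeff k).mul (hγ.hasDerivAt_deriv hI ht k)

theorem totallyGeodesic_of_dsym_eq_symProd (hU : IsOpen U) (hω : DifferentiableOn ℝ ω U)
    (hθ : ContinuousOn θ U) (h : ∀ x ∈ U, ∀ i j, dsym Γ ω i j x = symProd θ ω i j x) :
    TotallyGeodesic U Γ ω := by
  intro I hI hIc h0 γ hγ hinit
  have hθγ : ContinuousOn (fun t => ∑ i, θ (γ t) i * deriv (fun u => γ u i) t) I :=
    continuousOn_finsetSum _ fun i _ =>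
      ((continuousOn_pi.1 hθ i).comp hγ.2.1.continuousOn hγ.1).mul
        fun t ht => (hγ.hasDerivAt_deriv hI ht i).continuousAt.continuousWithinAt
  refine eq_zero_of_hasDerivAt_smul hIc h0 hθγ (fun t ht => ?_) hinit
  have hderiv := hγ.hasDerivAt_form_velocity hI ht (hω.differentiableAt (hU.mem_nhds (hγ.1 t ht)))
  simp_rw [h _ (hγ.1 t ht)] at hderiv
  rwa [sum_symProd_mul_mul] at hderiv

theorem TotallyGeodesic.of_eq_smul (h : TotallyGeodesic U Γ ω) {f : (Fin n → ℝ) → ℝ}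
    (hf : ∀ x ∈ U, f x ≠ 0) (hω' : ∀ x ∈ U, ω x = f x • ω' x) : TotallyGeodesic U Γ ω' := by
  intro I hI hIc h0 γ hγ hinit
  have hscale : ∀ t ∈ I, ∑ k, ω (γ t) k * deriv (fun u => γ u k) t =
      f (γ t) * ∑ k, ω' (γ t) k * deriv (fun u => γ u k) t := fun t ht => by
    simp only [hω' _ (hγ.1 t ht), Pi.smul_apply, smul_eq_mul, mul_assoc, Finset.mul_sum]
  intro t ht
  have hzero := h I hI hIc h0 γ hγ (by rw [hscale 0 h0, hinit, mul_zero]) t ht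
  rw [hscale t ht] at hzero
  exact (mul_eq_zero.1 hzero).resolve_left (hf _ (hγ.1 t ht))

theorem TotallyGeodesic.congr (h : TotallyGeodesic U Γ ω) (hω' : Set.EqOn ω ω' U) :
    TotallyGeodesic U Γ ω' :=
  h.of_eq_smul (f := 1) (fun _ _ => one_ne_zero) fun x hx => by simpa using hω' hx

end Geodesics

section MatrixInverse

variable {𝕜 E ι : Type*} [NontriviallyNormedField 𝕜] [NormedAddCommGroup E] [NormedSpace 𝕜 E]
  [Fintype ι] [DecidableEq ι] {s : Set E} {N : WithTop ℕ∞} {M : E → Matrix ι ι 𝕜}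

theorem contDiffOn_matrix_det (hM : ∀ i j, ContDiffOn 𝕜 N (fun x => M x i j) s) :
    ContDiffOn 𝕜 N (fun x => (M x).det) s := by
  simp only [Matrix.det_apply']
  fun_prop

theorem contDiffOn_matrix_inv (hM : ∀ i j, ContDiffOn 𝕜 N (fun x => M x i j) s)
    (hunit : ∀ x ∈ s, IsUnit (M x)) (i j : ι) :
    ContDiffOn 𝕜 N (fun x => (M x)⁻¹ i j) s := by
  simp only [Matrix.inv_def, Ring.inverse_eq_inv, Matrix.smul_apply, Matrix.adjugate_apply,
    smul_eq_mul]
  refine ((contDiffOn_matrix_det hM).inv fun x hx =>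
    ((Matrix.isUnit_iff_isUnit_det _).1 (hunit x hx)).ne_zero).mul
    (contDiffOn_matrix_det fun k l => ?_)
  rcases eq_or_ne k j with rfl | hk
  · simpa only [Matrix.updateRow_self] using contDiffOn_const
  · simpa only [Matrix.updateRow_ne hk] using hM k l

end MatrixInverse

section DualFrame

variable {n : ℕ} {U : Set (Fin n → ℝ)} {ω X : Fin n → (Fin n → ℝ) → Fin n → ℝ}
  {x : Fin n → ℝ}

theorem exists_isDualFrame (hω : ∀ i, ContDiffOn ℝ (⊤ : ℕ∞) (ω i) U)
    (hli : ∀ x ∈ U, LinearIndependent ℝ fun i => ω i x) : ∃ X, IsDualFrame U ω X := by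
  let M : (Fin n → ℝ) → Matrix (Fin n) (Fin n) ℝ := fun x => Matrix.of fun i => ω i x
  have hM : ∀ x ∈ U, IsUnit (M x) := fun x hx =>
    Matrix.linearIndependent_rows_iff_isUnit.1 (hli x hx)
  refine ⟨fun a x k => (M x)⁻¹ k a, fun a => contDiffOn_pi.2 fun k => ?_, fun x hx i j => ?_⟩
  · exact contDiffOn_matrix_inv (fun i j => contDiffOn_pi.1 (hω i) j) hM k a
  · have hdet := (Matrix.isUnit_iff_isUnit_det _).1 (hM x hx)
    rw [← Matrix.one_apply, ← Matrix.mul_nonsing_inv _ hdet]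
    rfl

theorem IsDualFrame.sum_frame_mul_form (hX : IsDualFrame U ω X) (hx : x ∈ U) (k i : Fin n) :
    ∑ a, X a x k * ω a x i = if k = i then 1 else 0 := by
  have hright : Matrix.of (fun a k => ω a x k) * Matrix.of (fun k a => X a x k) = 1 :=
    Matrix.ext fun a b => by simpa [Matrix.mul_apply, Matrix.one_apply] using hX.2 x hx a b
  have hleft := Matrix.ext_iff.2 (mul_eq_one_comm.1 hright) k i
  rwa [Matrix.one_apply] at hleft

theorem IsDualFrame.map_single (hX : IsDualFrame U ω X) (hx : x ∈ U)
    (L : (Fin n → ℝ) →ₗ[ℝ] ℝ) (i : Fin n) :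
    L (Pi.single i 1) = ∑ a, L (X a x) * ω a x i := by
  have hsingle : Pi.single i 1 = ∑ a, ω a x i • X a x := by
    ext k
    simp [Pi.single_apply, ← hX.sum_frame_mul_form hx, mul_comm]
  simp [hsingle, mul_comm]

theorem IsDualFrame.pd_eq_sum (hX : IsDualFrame U ω X) (hx : x ∈ U) (f : (Fin n → ℝ) → ℝ)
    (i : Fin n) : pd i f x = ∑ a, fderiv ℝ f x (X a x) * ω a x i :=
  hX.map_single hx (fderiv ℝ f x : (Fin n → ℝ) →ₗ[ℝ] ℝ) i

theorem IsDualFrame.eq_sum_smul (hX : IsDualFrame U ω X) (hx : x ∈ U) (η : Fin n → ℝ) :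
    η = ∑ a, (∑ k, η k * X a x k) • ω a x := by
  ext i
  simpa [dotProduct, Pi.single_apply] using hX.map_single hx (dotProductBilin ℝ ℝ η) i

end DualFrame

section AdaptedConnection

variable {n : ℕ} {U : Set (Fin n → ℝ)} {ω X θ : Fin n → (Fin n → ℝ) → Fin n → ℝ}
  {x : Fin n → ℝ}

/-- The Christoffel symbols of the torsion-free connection `Γ` with `d^s_Γ ωₐ = θₐ·ωₐ` for all `a`,
where `ω` is a coframe with dual frame `X`. The symmetrized derivative of `ωₐ` is written as its
symmetric differential for the flat connection. -/
noncomputable def adaptedConn (ω X θ : Fin n → (Fin n → ℝ) → Fin n → ℝ) (k i j : Fin n)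
    (x : Fin n → ℝ) : ℝ :=
  ∑ a, X a x k * (dsym 0 (ω a) i j x - symProd (θ a) (ω a) i j x)

theorem isTorsionFreeConn_adaptedConn (hU : IsOpen U)
    (hω : ∀ a, ContDiffOn ℝ (⊤ : ℕ∞) (ω a) U) (hX : ∀ a, ContDiffOn ℝ (⊤ : ℕ∞) (X a) U)
    (hθ : ∀ a, ContDiffOn ℝ (⊤ : ℕ∞) (θ a) U) : IsTorsionFreeConn U (adaptedConn ω X θ) := by
  refine ⟨fun k i j => ContDiffOn.sum fun a _ => (contDiffOn_pi.1 (hX a) k).mul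
    ((contDiffOn_dsym hU (fun _ => contDiffOn_const) (hω a) (by simp)).sub
      (contDiffOn_symProd (hθ a) (hω a) i j)), fun k i j x => ?_⟩
  refine Finset.sum_congr rfl fun a _ => ?_
  rw [dsym_comm (i := i) (j := j) fun _ => rfl, symProd_comm]

theorem IsDualFrame.dsym_adaptedConn (hX : IsDualFrame U ω X) (hx : x ∈ U) (a i j : Fin n) :
    dsym (adaptedConn ω X θ) (ω a) i j x = symProd (θ a) (ω a) i j x := by
  have hcontract : ∑ k, adaptedConn ω X θ k i j x * ω a x k =
      dsym 0 (ω a) i j x - symProd (θ a) (ω a) i j x := by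
    calc ∑ k, adaptedConn ω X θ k i j x * ω a x k
        = ∑ b, (∑ k, ω a x k * X b x k) *
            (dsym 0 (ω b) i j x - symProd (θ b) (ω b) i j x) := by
          simp only [adaptedConn, Finset.sum_mul]
          rw [Finset.sum_comm]
          exact Finset.sum_congr rfl fun b _ => Finset.sum_congr rfl fun k _ => by ring
      _ = dsym 0 (ω a) i j x - symProd (θ a) (ω a) i j x := by simp [hX.2 x hx]
  rw [dsym, hcontract]
  simp [dsym]

theorem symProd_sum_smul_left {ι : Type*} (s : Finset ι) (f : ι → (Fin n → ℝ) → ℝ)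
    (α : ι → (Fin n → ℝ) → Fin n → ℝ) (β : (Fin n → ℝ) → Fin n → ℝ) (i j : Fin n) :
    symProd (∑ b ∈ s, f b • α b) β i j x = ∑ b ∈ s, f b x * symProd (α b) β i j x := by
  simp only [symProd, Finset.sum_apply, Pi.smul_apply', Pi.smul_apply, smul_eq_mul,
    Finset.sum_mul, ← Finset.sum_add_distrib, Finset.sum_div]
  exact Finset.sum_congr rfl fun b _ => by ring

theorem symProd_form_comm (α β : (Fin n → ℝ) → Fin n → ℝ) (i j : Fin n) :
    symProd α β i j x = symProd β α i j x := by
  rw [symProd, symProd]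
  ring

theorem symProd_sum_smul_sum_smul {ι κ : Type*} (s : Finset ι) (t : Finset κ)
    (g : κ → (Fin n → ℝ) → ℝ) (f : ι → (Fin n → ℝ) → ℝ)
    (β : κ → (Fin n → ℝ) → Fin n → ℝ) (α : ι → (Fin n → ℝ) → Fin n → ℝ) (i j : Fin n) :
    symProd (∑ b ∈ t, g b • β b) (∑ a ∈ s, f a • α a) i j x =
      ∑ a ∈ s, ∑ b ∈ t, g b x * f a x * symProd (β b) (α a) i j x := by
  rw [symProd_form_comm, symProd_sum_smul_left]
  refine Finset.sum_congr rfl fun a _ => ?_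
  rw [symProd_form_comm, symProd_sum_smul_left, Finset.mul_sum]
  exact Finset.sum_congr rfl fun b _ => by ring

theorem IsDualFrame.symProd_pd (hX : IsDualFrame U ω X) (hx : x ∈ U) (f : (Fin n → ℝ) → ℝ)
    (β : (Fin n → ℝ) → Fin n → ℝ) (i j : Fin n) :
    symProd (fun y k => pd k f y) β i j x =
      ∑ b, fderiv ℝ f x (X b x) * symProd (ω b) β i j x := by
  simp only [symProd, hX.pd_eq_sum hx, Finset.sum_mul, ← Finset.sum_add_distrib, Finset.sum_div]
  exact Finset.sum_congr rfl fun b _ => by ring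

theorem sum_sum_mul_eq_of_add_swap_eq {ι : Type*} {s : Finset ι} {A B P : ι → ι → ℝ}
    (hP : ∀ a b, P a b = P b a) (hAB : ∀ a b, A a b + A b a = B a b + B b a) :
    ∑ a ∈ s, ∑ b ∈ s, A a b * P a b = ∑ a ∈ s, ∑ b ∈ s, B a b * P a b := by
  have hswap : ∀ C : ι → ι → ℝ, ∑ a ∈ s, ∑ b ∈ s, C a b * P a b =
      (∑ a ∈ s, ∑ b ∈ s, (C a b + C b a) * P a b) / 2 := fun C => by
    have hcomm : ∑ a ∈ s, ∑ b ∈ s, C b a * P a b = ∑ a ∈ s, ∑ b ∈ s, C a b * P a b := by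
      rw [Finset.sum_comm]
      simp only [hP]
    simp only [add_mul, Finset.sum_add_distrib, hcomm, add_self_div_two]
  simp only [hswap A, hAB, ← hswap B]

variable {s : Fin n → Fin n → (Fin n → ℝ) → ℝ} {f t : Fin n → (Fin n → ℝ) → ℝ}

theorem IsDualFrame.dsym_adaptedConn_sum_smul (hX : IsDualFrame U ω X) (hx : x ∈ U)
    (hω : ∀ a, DifferentiableAt ℝ (ω a) x) (hf : ∀ a, DifferentiableAt ℝ (f a) x) (i j : Fin n) :
    dsym (adaptedConn ω X fun a => ∑ b, s a b • ω b) (∑ a, f a • ω a) i j x =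
      ∑ a, ∑ b, (fderiv ℝ (f a) x (X b x) + f a x * s a b x) * symProd (ω b) (ω a) i j x := by
  rw [dsym_sum _ fun a _ => (hf a).smul (hω a)]
  refine Finset.sum_congr rfl fun a _ => ?_
  rw [dsym_smul (hf a) (hω a), hX.dsym_adaptedConn hx, hX.symProd_pd hx, symProd_sum_smul_left,
    Finset.mul_sum, ← Finset.sum_add_distrib]
  exact Finset.sum_congr rfl fun b _ => by ring

theorem IsDualFrame.totallyGeodesic_adaptedConn (hX : IsDualFrame U ω X) (hU : IsOpen U)
    {a : Fin n} (hω : DifferentiableOn ℝ (ω a) U) (hθ : ContinuousOn (θ a) U) :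
    TotallyGeodesic U (adaptedConn ω X θ) (ω a) :=
  totallyGeodesic_of_dsym_eq_symProd hU hω hθ fun _ hx => hX.dsym_adaptedConn hx a

theorem IsDualFrame.totallyGeodesic_adaptedConn_sum_smul (hX : IsDualFrame U ω X) (hU : IsOpen U)
    (hω : ∀ a, DifferentiableOn ℝ (ω a) U) (hf : ∀ a, DifferentiableOn ℝ (f a) U)
    (ht : ∀ a, ContinuousOn (t a) U)
    (h : ∀ x ∈ U, ∀ a b, (fderiv ℝ (f a) x (X b x) + f a x * s a b x) +
      (fderiv ℝ (f b) x (X a x) + f b x * s b a x) = t b x * f a x + t a x * f b x) :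
    TotallyGeodesic U (adaptedConn ω X fun a => ∑ b, s a b • ω b) (∑ a, f a • ω a) := by
  refine totallyGeodesic_of_dsym_eq_symProd (θ := ∑ b, t b • ω b) hU ?_ ?_ fun x hx i j => ?_
  · exact DifferentiableOn.sum fun a _ => (hf a).smul (hω a)
  · exact ContinuousOn.congr (continuousOn_finsetSum _ fun b _ => (ht b).smul (hω b).continuousOn)
      fun x _ => Finset.sum_apply x _ _
  · rw [hX.dsym_adaptedConn_sum_smul hx (fun a => (hω a).differentiableAt (hU.mem_nhds hx))
      fun a => (hf a).differentiableAt (hU.mem_nhds hx), symProd_sum_smul_sum_smul]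
    exact sum_sum_mul_eq_of_add_swap_eq (fun a b => symProd_form_comm _ _ i j) (h x hx)

end AdaptedConnection

section WebConnection

variable {n : ℕ} {U : Set (Fin n → ℝ)} {ω X : Fin n → (Fin n → ℝ) → Fin n → ℝ}
  {a : Fin n → (Fin n → ℝ) → ℝ} {x : Fin n → ℝ}

theorem sInv_antisymm (X : Fin n → (Fin n → ℝ) → Fin n → ℝ) (a : Fin n → (Fin n → ℝ) → ℝ)
    (i j : Fin n) (x : Fin n → ℝ) : sInv X a i j x = -sInv X a j i x := by
  rw [sInv, sInv, ← neg_sub (a i x), one_div, one_div, inv_neg]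
  ring

theorem sInv_self (X : Fin n → (Fin n → ℝ) → Fin n → ℝ) (a : Fin n → (Fin n → ℝ) → ℝ)
    (i : Fin n) (x : Fin n → ℝ) : sInv X a i i x = 0 :=
  self_eq_neg.1 (sInv_antisymm X a i i x)

theorem fderiv_add_mul_sInv_add_swap (hne : ∀ i, a i x ≠ 0)
    (hinj : Function.Injective fun i => a i x) (i j : Fin n) :
    (fderiv ℝ (a i) x (X j x) + a i x * sInv X a i j x) +
        (fderiv ℝ (a j) x (X i x) + a j x * sInv X a j i x) =
      fderiv ℝ (a j) x (X j x) / a j x * a i x + fderiv ℝ (a i) x (X i x) / a i x * a j x := by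
  have hi := hne i
  have hj := hne j
  rcases eq_or_ne i j with rfl | hij
  · rw [sInv_self]
    field_simp
    ring
  · have hsub : a i x - a j x ≠ 0 := sub_ne_zero.2 (hinj.ne hij)
    rw [sInv_antisymm X a j i, sInv]
    field_simp
    ring

theorem contDiffOn_sInv {N M : WithTop ℕ∞} (hU : IsOpen U) (hX : ∀ i, ContDiffOn ℝ N (X i) U)
    (ha : ∀ i, ContDiffOn ℝ M (a i) U) (hNM : N + 1 ≤ M) (hne : ∀ x ∈ U, ∀ i, a i x ≠ 0)
    (hinj : ∀ x ∈ U, Function.Injective fun i => a i x) (i j : Fin n) :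
    ContDiffOn ℝ N (sInv X a i j) U := by
  rcases eq_or_ne i j with rfl | hij
  · exact contDiffOn_const.congr fun x _ => sInv_self X a i x
  have haN : ∀ k, ContDiffOn ℝ N (a k) U := fun k => (ha k).of_le (le_self_add.trans hNM)
  have hlog : ∀ k l, ContDiffOn ℝ N (fun x => fderiv ℝ (a k) x (X l x) / a k x) U := fun k l =>
    (contDiffOn_fderiv_apply hU (ha k) (hX l) hNM).div (haN k) fun x hx => hne x hx k
  exact (contDiffOn_const.div ((haN i).sub (haN j)) fun x hx =>
    sub_ne_zero.2 ((hinj x hx).ne hij)).mul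
    (((haN i).mul ((hlog j j).sub (hlog i j))).sub ((haN j).mul ((hlog j i).sub (hlog i i))))

/-- The connection for which the web `⟨ω₁, …, ωₙ, ∑ ωᵢ, ∑ aᵢ ωᵢ⟩` is geodesic, where `X` is the
frame dual to `ω`. -/
noncomputable def webConn (ω X : Fin n → (Fin n → ℝ) → Fin n → ℝ) (a : Fin n → (Fin n → ℝ) → ℝ) :
    Fin n → Fin n → Fin n → (Fin n → ℝ) → ℝ :=
  adaptedConn ω X fun i => ∑ j, sInv X a i j • ω j

theorem contDiffOn_sum_sInv_smul (hU : IsOpen U) (hω : ∀ i, ContDiffOn ℝ (⊤ : ℕ∞) (ω i) U)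
    (hX : ∀ i, ContDiffOn ℝ (⊤ : ℕ∞) (X i) U) (ha : ∀ i, ContDiffOn ℝ (⊤ : ℕ∞) (a i) U)
    (hne : ∀ x ∈ U, ∀ i, a i x ≠ 0) (hinj : ∀ x ∈ U, Function.Injective fun i => a i x)
    (i : Fin n) : ContDiffOn ℝ (⊤ : ℕ∞) (∑ j, sInv X a i j • ω j) U :=
  contDiffOn_pi.2 fun k => ContDiffOn.congr
    (ContDiffOn.sum (s := Finset.univ) fun j _ =>
      (contDiffOn_sInv hU hX ha (by simp) hne hinj i j).mul (contDiffOn_pi.1 (hω j) k))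
    fun x _ => by simp

theorem isTorsionFreeConn_webConn (hU : IsOpen U) (hω : ∀ i, ContDiffOn ℝ (⊤ : ℕ∞) (ω i) U)
    (hX : ∀ i, ContDiffOn ℝ (⊤ : ℕ∞) (X i) U) (ha : ∀ i, ContDiffOn ℝ (⊤ : ℕ∞) (a i) U)
    (hne : ∀ x ∈ U, ∀ i, a i x ≠ 0) (hinj : ∀ x ∈ U, Function.Injective fun i => a i x) :
    IsTorsionFreeConn U (webConn ω X a) :=
  isTorsionFreeConn_adaptedConn hU hω hX (contDiffOn_sum_sInv_smul hU hω hX ha hne hinj)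

theorem IsDualFrame.totallyGeodesic_webConn (hX : IsDualFrame U ω X) (hU : IsOpen U)
    (hω : ∀ i, ContDiffOn ℝ (⊤ : ℕ∞) (ω i) U) (ha : ∀ i, ContDiffOn ℝ (⊤ : ℕ∞) (a i) U)
    (hne : ∀ x ∈ U, ∀ i, a i x ≠ 0) (hinj : ∀ x ∈ U, Function.Injective fun i => a i x)
    (i : Fin n) : TotallyGeodesic U (webConn ω X a) (ω i) :=
  hX.totallyGeodesic_adaptedConn hU ((hω i).differentiableOn (by simp))
    (contDiffOn_sum_sInv_smul hU hω hX.1 ha hne hinj i).continuousOn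

theorem IsDualFrame.totallyGeodesic_webConn_sum (hX : IsDualFrame U ω X) (hU : IsOpen U)
    (hω : ∀ i, DifferentiableOn ℝ (ω i) U) : TotallyGeodesic U (webConn ω X a) (∑ i, ω i) := by
  have hsum := hX.totallyGeodesic_adaptedConn_sum_smul (s := sInv X a) (f := fun _ _ => 1)
    (t := fun _ _ => 0) hU hω (fun _ => differentiableOn_const 1) (fun _ => continuousOn_const)
    fun x _ i j => by simp [sInv_antisymm X a j i]
  exact hsum.congr fun x _ => by simp [Finset.sum_apply]

theorem IsDualFrame.totallyGeodesic_webConn_sum_smul (hX : IsDualFrame U ω X) (hU : IsOpen U)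
    (hω : ∀ i, DifferentiableOn ℝ (ω i) U) (ha : ∀ i, ContDiffOn ℝ 1 (a i) U)
    (hne : ∀ x ∈ U, ∀ i, a i x ≠ 0) (hinj : ∀ x ∈ U, Function.Injective fun i => a i x) :
    TotallyGeodesic U (webConn ω X a) (∑ i, a i • ω i) :=
  hX.totallyGeodesic_adaptedConn_sum_smul
    (t := fun i x => fderiv ℝ (a i) x (X i x) / a i x) hU hω
    (fun i => (ha i).differentiableOn one_ne_zero)
    (fun i => ((contDiffOn_fderiv_apply hU (ha i) ((hX.1 i).of_le (by simp)) (by simp)).div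
      ((ha i).of_le zero_le_one) fun x hx => hne x hx i).continuousOn)
    fun x hx => fderiv_add_mul_sInv_add_swap (hne x hx) (hinj x hx)

end WebConnection

section GeneralPosition

variable {n d : ℕ} {U : Set (Fin n → ℝ)}

/-- General position of a family of `1`-forms on `ℝⁿ`: any `n` of them are linearly independent at
every point of `U`. This is the second component of `IsWeb`. -/
def InGeneralPosition (U : Set (Fin n → ℝ)) (ωs : Fin d → (Fin n → ℝ) → Fin n → ℝ) : Prop :=
  ∀ x ∈ U, ∀ σ : Fin n → Fin d, Function.Injective σ →
    LinearIndependent ℝ fun i => ωs (σ i) x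

theorem InGeneralPosition.smul {ωs : Fin d → (Fin n → ℝ) → Fin n → ℝ}
    (h : InGeneralPosition U ωs) {c : Fin d → (Fin n → ℝ) → ℝ} (hc : ∀ i, ∀ x ∈ U, c i x ≠ 0) :
    InGeneralPosition U fun i => c i • ωs i := fun x hx σ hσ =>
  (h x hx σ hσ).units_smul fun i => Units.mk0 (c (σ i) x) (hc (σ i) x hx)

theorem InGeneralPosition.eq_zero_of_le_card {ωs : Fin d → (Fin n → ℝ) → Fin n → ℝ}
    (h : InGeneralPosition U ωs) {x : Fin n → ℝ} (hx : x ∈ U) {s : Finset (Fin d)}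
    (hs : n ≤ s.card) {v : Fin n → ℝ} (hv : ∀ i ∈ s, ∑ k, ωs i x k * v k = 0) : v = 0 := by
  have hunit : IsUnit (Matrix.of fun i => ωs (s.orderEmbOfCardLe hs i) x) :=
    Matrix.linearIndependent_rows_iff_isUnit.1 (h x hx _ (s.orderEmbOfCardLe hs).injective)
  refine Matrix.mulVec_injective_of_isUnit hunit ?_
  rw [Matrix.mulVec_zero]
  exact funext fun i => hv _ (s.orderEmbOfCardLe_mem hs i)

variable {ωs : Fin (n + 2) → (Fin n → ℝ) → Fin n → ℝ} {X : Fin n → (Fin n → ℝ) → Fin n → ℝ}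
  {x : Fin n → ℝ}

theorem InGeneralPosition.apply_frame_ne_zero (h : InGeneralPosition U ωs)
    (hX : IsDualFrame U (fun a => ωs (Fin.castAdd 2 a)) X) (hx : x ∈ U) (p : Fin 2) (a : Fin n) :
    ∑ k, ωs (Fin.natAdd n p) x k * X a x k ≠ 0 := by
  intro hzero
  have hXa : X a x = 0 := by
    refine h.eq_zero_of_le_card hx (s := {Fin.castAdd 2 a, Fin.natAdd n (1 - p)}ᶜ) ?_ ?_
    · have := Finset.card_le_two (a := Fin.castAdd 2 a) (b := Fin.natAdd n (1 - p))
      rw [Finset.card_compl, Fintype.card_fin]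
      omega
    · refine fun i => Fin.addCases (fun b hb => ?_) (fun q hq => ?_) i
      · have hba : b ≠ a := by rintro rfl; simp at hb
        simp [hX.2 x hx, hba]
      · have hqp : q = p := by
          have : q ≠ 1 - p := by rintro rfl; simp at hq
          omega
        rw [hqp, hzero]
  simpa [hXa] using hX.2 x hx a a

theorem InGeneralPosition.apply_frame_injective (h : InGeneralPosition U ωs)
    (hX : IsDualFrame U (fun a => ωs (Fin.castAdd 2 a)) X) (hx : x ∈ U)
    (hsum : ωs (Fin.natAdd n 0) x = ∑ a, ωs (Fin.castAdd 2 a) x) :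
    Function.Injective fun a => ∑ k, ωs (Fin.natAdd n 1) x k * X a x k := by
  intro a b hab
  by_contra hne
  have hone : ∀ c, ∑ k, ωs (Fin.natAdd n 0) x k * X c x k = 1 := fun c => by
    simp only [hsum, Finset.sum_apply, Finset.sum_mul]
    rw [Finset.sum_comm]
    simp [hX.2 x hx]
  have hsub : X a x - X b x = 0 := by
    refine h.eq_zero_of_le_card hx (s := {Fin.castAdd 2 a, Fin.castAdd 2 b}ᶜ) ?_ ?_
    · have := Finset.card_le_two (a := Fin.castAdd 2 a) (b := Fin.castAdd 2 b)
      rw [Finset.card_compl, Fintype.card_fin]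
      omega
    · simp only [Pi.sub_apply, mul_sub, Finset.sum_sub_distrib, sub_eq_zero]
      refine fun i => Fin.addCases (fun c hc => ?_) (fun q _ => ?_) i
      · have hca : c ≠ a := by rintro rfl; simp at hc
        have hcb : c ≠ b := by rintro rfl; simp at hc
        simp [hX.2 x hx, hca, hcb]
      · fin_cases q
        · exact (hone a).trans (hone b).symm
        · exact hab
  have haa := hX.2 x hx a a
  have hba := hX.2 x hx a b
  simp_all [sub_eq_zero]

theorem exists_smul_eq_sum (hgen : InGeneralPosition U ωs)
    (hω : ∀ i, ContDiffOn ℝ (⊤ : ℕ∞) (ωs i) U) :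
    ∃ c : Fin (n + 2) → (Fin n → ℝ) → ℝ, (∀ i, ContDiffOn ℝ (⊤ : ℕ∞) (c i) U) ∧
      (∀ i, ∀ x ∈ U, c i x ≠ 0) ∧ ∀ x ∈ U, (c (Fin.natAdd n 0) • ωs (Fin.natAdd n 0)) x =
        ∑ a, (c (Fin.castAdd 2 a) • ωs (Fin.castAdd 2 a)) x := by
  obtain ⟨X, hX⟩ := exists_isDualFrame (fun a => hω (Fin.castAdd 2 a))
    fun x hx => hgen x hx _ (Fin.castAdd_injective n 2)
  refine ⟨Fin.addCases (fun a x => ∑ k, ωs (Fin.natAdd n 0) x k * X a x k) fun _ _ => 1,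
    fun i => ?_, fun i x hx => ?_, fun x hx => ?_⟩
  · refine Fin.addCases (fun a => ?_) (fun p => ?_) i
    · simp only [Fin.addCases_left]
      exact ContDiffOn.sum fun k _ =>
        (contDiffOn_pi.1 (hω _) k).mul (contDiffOn_pi.1 (hX.1 a) k)
    · simpa only [Fin.addCases_right] using contDiffOn_const
  · refine Fin.addCases (fun a => ?_) (fun p => ?_) i
    · simpa only [Fin.addCases_left] using hgen.apply_frame_ne_zero hX hx 0 a
    · simp
  · simpa using hX.eq_sum_smul hx (ωs (Fin.natAdd n 0) x)

theorem exists_conn_of_eq_sum (hU : IsOpen U) (hgen : InGeneralPosition U ωs)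
    (hω : ∀ i, ContDiffOn ℝ (⊤ : ℕ∞) (ωs i) U)
    (hsum : ∀ x ∈ U, ωs (Fin.natAdd n 0) x = ∑ a, ωs (Fin.castAdd 2 a) x) :
    ∃ Γ : Fin n → Fin n → Fin n → (Fin n → ℝ) → ℝ,
      IsTorsionFreeConn U Γ ∧ ∀ i, TotallyGeodesic U Γ (ωs i) := by
  have hcoframe := fun a => hω (Fin.castAdd 2 a)
  have hdiff := fun a => (hcoframe a).differentiableOn (by simp)
  obtain ⟨X, hX⟩ := exists_isDualFrame hcoframe
    fun x hx => hgen x hx _ (Fin.castAdd_injective n 2)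
  let a : Fin n → (Fin n → ℝ) → ℝ := fun i x => ∑ k, ωs (Fin.natAdd n 1) x k * X i x k
  have ha : ∀ i, ContDiffOn ℝ (⊤ : ℕ∞) (a i) U := fun i => ContDiffOn.sum fun k _ =>
    (contDiffOn_pi.1 (hω _) k).mul (contDiffOn_pi.1 (hX.1 i) k)
  have hne : ∀ x ∈ U, ∀ i, a i x ≠ 0 := fun x hx i => hgen.apply_frame_ne_zero hX hx 1 i
  have hinj : ∀ x ∈ U, Function.Injective fun i => a i x := fun x hx =>
    hgen.apply_frame_injective hX hx (hsum x hx)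
  refine ⟨webConn (fun i => ωs (Fin.castAdd 2 i)) X a,
    isTorsionFreeConn_webConn hU hcoframe hX.1 ha hne hinj, fun i => ?_⟩
  refine Fin.addCases (hX.totallyGeodesic_webConn hU hcoframe ha hne hinj) (fun p => ?_) i
  fin_cases p
  · exact (hX.totallyGeodesic_webConn_sum hU hdiff).congr fun x hx => by
      simpa using (hsum x hx).symm
  · refine (hX.totallyGeodesic_webConn_sum_smul hU hdiff (fun i => (ha i).of_le (by simp))
      hne hinj).congr fun x hx => ?_
    simpa using (hX.eq_sum_smul hx (ωs (Fin.natAdd n 1) x)).symm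

end GeneralPosition

theorem statement8_general {n : ℕ} {U : Set (Fin n → ℝ)} (hU : IsOpen U)
    {ωs : Fin (n + 2) → (Fin n → ℝ) → Fin n → ℝ} (hω : ∀ i, ContDiffOn ℝ (⊤ : ℕ∞) (ωs i) U)
    (hgen : InGeneralPosition U ωs) :
    ∃ Γ : Fin n → Fin n → Fin n → (Fin n → ℝ) → ℝ,
      IsTorsionFreeConn U Γ ∧ ∀ i, TotallyGeodesic U Γ (ωs i) := by
  obtain ⟨c, hc, hc0, hsum⟩ := exists_smul_eq_sum hgen hω
  obtain ⟨Γ, hΓ, hgeo⟩ :=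
    exists_conn_of_eq_sum hU (hgen.smul hc0) (fun i => (hc i).smul (hω i)) hsum
  exact ⟨Γ, hΓ, fun i => (hgeo i).of_eq_smul (hc0 i) fun _ _ => rfl⟩

/-- every `(n+2)`-web of hypersurfaces on `U` is geodesic for some
torsion-free affine connection on `U`. -/
theorem statement8 {n : ℕ} (hn : 2 ≤ n) (U : Set (Fin n → ℝ)) (hU : IsOpen U)
    (hUconn : IsConnected U)
    (ωs : Fin (n + 2) → (Fin n → ℝ) → Fin n → ℝ) (hweb : IsWeb U ωs) :
    ∃ Γ : Fin n → Fin n → Fin n → (Fin n → ℝ) → ℝ,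
      IsTorsionFreeConn U Γ ∧ ∀ i, TotallyGeodesic U Γ (ωs i) :=
  statement8_general hU (fun i => (hweb.1 i).1) hweb.2
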